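/- arXiv:2503.02001 — 2 statements merged into one kernel-verified Lean document; each statement's English description precedes it below -/
import Mathlib

section
/- Let C ⊆ F^n be the code with parity-check matrix H produced by the construction (Algorithm 1). Then every coordinate i ∈ {k+b(δ−1)+1,…,n} has an r-recovery set contained in {k+1,…,k+⌈s/r⌉·r}. -/
/-!
Row `i - k` of the parity-check matrix lies in the last group of rows and carries the single
identity entry `1` in column `i`; its other nonzero entries are a row of `Q`, sitting in one
block of `r` consecutive columns inside `{k, …, k + ⌈s/r⌉·r - 1}`. Solving this parity check
for `x i` expresses it through the coordinates of that block, which is the recovery set. The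
hypothesis `⌈s/r⌉·r ≤ b(δ-1)` guarantees that the block does not contain `i`.
`recSet_of_parity_check` is the general principle; `Hval_last_self` and `Hval_last_eq_zero`
describe the row.
-/

/-- `b = s · t_i` where `s = k / r`: the number of lines of the resolvable design. -/
def bVal (r ti k : ℕ) : ℕ := k / r * ti

/-- `c = ⌈s / r⌉` where `s = k / r`. -/
def cVal (r k : ℕ) : ℕ := (k / r + r - 1) / r

/-- Block length `n = k + b(δ-1) + ⌈s/r⌉(δ-1)` of the constructed code. -/
def nVal (r δ ti k : ℕ) : ℕ := k + bVal r ti k * (δ - 1) + cVal r k * (δ - 1)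

/-- Number of rows `(b + ⌈s/r⌉)(δ-1)` of the parity-check matrix `H`. -/
def mVal (r δ ti k : ℕ) : ℕ := (bVal r ti k + cVal r k) * (δ - 1)

/-- Entry of the parity-check matrix `H` of Algorithm 1 (0-indexed rows `ρ` and
columns `γ`).  For `ρ` in the `j`-th of the first `b` row blocks (each of `δ-1` rows):
the columns indexed by the line `L j` carry the columns of `Q` (the ℓ-th smallest point
of `L j` receiving the ℓ-th column of `Q`), columns `k + j(δ-1), …, k + (j+1)(δ-1) - 1`
carry the identity, and all other entries vanish.  The last `⌈s/r⌉(δ-1)` rows carry a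
block-diagonal matrix of copies of `Q` in columns `k, …, k + ⌈s/r⌉·r - 1` and the
identity in the last `⌈s/r⌉(δ-1)` columns. -/
def Hval (F : Type*) [Field F] (r δ ti k : ℕ)
    (Q : Matrix (Fin (δ - 1)) (Fin r) F) (L : ℕ → Finset ℕ) (ρ γ : ℕ) : F :=
  if ρ < bVal r ti k * (δ - 1) then
    (if γ < k then
      (if γ ∈ L (ρ / (δ - 1)) then
        (if h : ρ % (δ - 1) < δ - 1 ∧ ((L (ρ / (δ - 1))).filter (fun x => x < γ)).card < r then
          Q ⟨ρ % (δ - 1), h.1⟩ ⟨((L (ρ / (δ - 1))).filter (fun x => x < γ)).card, h.2⟩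
        else 0)
      else 0)
    else if γ < k + bVal r ti k * (δ - 1) then (if γ = k + ρ then (1 : F) else 0)
    else 0)
  else
    (if γ < k then 0
    else if γ < k + cVal r k * r then
      (if (γ - k) / r = (ρ - bVal r ti k * (δ - 1)) / (δ - 1) then
        (if h : (ρ - bVal r ti k * (δ - 1)) % (δ - 1) < δ - 1 ∧ (γ - k) % r < r then
          Q ⟨(ρ - bVal r ti k * (δ - 1)) % (δ - 1), h.1⟩ ⟨(γ - k) % r, h.2⟩
        else 0)
      else 0)
    else if γ < k + bVal r ti k * (δ - 1) then 0
    else (if γ = k + bVal r ti k * (δ - 1) + (ρ - bVal r ti k * (δ - 1)) then (1 : F) else 0))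

/-- The parity-check matrix `H` produced by Algorithm 1. -/
def Hmat (F : Type*) [Field F] (r δ ti k : ℕ)
    (Q : Matrix (Fin (δ - 1)) (Fin r) F) (L : ℕ → Finset ℕ) :
    Matrix (Fin (mVal r δ ti k)) (Fin (nVal r δ ti k)) F :=
  Matrix.of fun ρ γ => Hval F r δ ti k Q L (ρ : ℕ) (γ : ℕ)

/-- The code `C = {x ∈ F^n : H x = 0}` produced by Algorithm 1. -/
noncomputable def codeC (F : Type*) [Field F] (r δ ti k : ℕ)
    (Q : Matrix (Fin (δ - 1)) (Fin r) F) (L : ℕ → Finset ℕ) :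
    Submodule F (Fin (nVal r δ ti k) → F) :=
  LinearMap.ker (Matrix.mulVecLin (Hmat F r δ ti k Q L))

/-- `R` is an `r`-recovery set for coordinate `i` of the code `C ⊆ F^n`. -/
def RecSet {F : Type*} [Field F] {n : ℕ} (C : Set (Fin n → F)) (r : ℕ)
    (i : Fin n) (R : Finset (Fin n)) : Prop :=
  i ∉ R ∧ R.card ≤ r ∧ ∃ a : Fin n → F, ∀ x ∈ C, x i = ∑ j ∈ R, a j * x j

/-- If a vector `h` is orthogonal to the code, has entry `1` at `i`, and is supported on
`R ∪ {i}` with `|R| ≤ r`, then `R` is an `r`-recovery set for `i`. -/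
lemma recSet_of_parity_check {F : Type*} [Field F] {n r : ℕ} {C : Set (Fin n → F)}
    {i : Fin n} {R : Finset (Fin n)} (h : Fin n → F) (hiR : i ∉ R) (hcard : R.card ≤ r)
    (hC : ∀ x ∈ C, ∑ j, h j * x j = 0) (hi : h i = 1)
    (hsupp : ∀ j, j ∉ R → j ≠ i → h j = 0) : RecSet C r i R := by
  refine ⟨hiR, hcard, fun j => - h j, fun x hx => ?_⟩
  have hsum : ∑ j ∈ insert i R, h j * x j = 0 := by
    rw [← hC x hx]
    refine Finset.sum_subset (Finset.subset_univ _) fun j _ hj => ?_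
    rw [Finset.mem_insert, not_or] at hj
    rw [hsupp j hj.2 hj.1, zero_mul]
  rw [Finset.sum_insert hiR, hi, one_mul] at hsum
  simp only [neg_mul, Finset.sum_neg_distrib]
  exact eq_neg_of_add_eq_zero_left hsum

/-- The columns of the block-diagonal part that lie in its `q`-th block of `r` columns. -/
def blockCols (r δ ti k q : ℕ) : Finset (Fin (nVal r δ ti k)) :=
  Finset.univ.filter fun j =>
    k ≤ (j : ℕ) ∧ (j : ℕ) < k + cVal r k * r ∧ ((j : ℕ) - k) / r = q

lemma card_blockCols_le (r δ ti k q : ℕ) (hr : 0 < r) :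
    (blockCols r δ ti k q).card ≤ r := by
  -- A column of the block is determined by its residue modulo `r` after shifting by `k`.
  calc (blockCols r δ ti k q).card ≤ (Finset.range r).card := by
        refine Finset.card_le_card_of_injOn (fun j => ((j : ℕ) - k) % r) ?_ ?_
        · intro j _
          simpa using Nat.mod_lt _ hr
        · intro j hj j' hj' hjj'
          simp only [blockCols, Finset.coe_filter, Finset.mem_univ, true_and,
            Set.mem_setOf_eq] at hj hj'
          have h1 := Nat.div_add_mod ((j : ℕ) - k) r
          have h2 := Nat.div_add_mod ((j' : ℕ) - k) r
          simp only at hjj'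
          rw [hj.2.2, hjj'] at h1
          rw [hj'.2.2] at h2
          ext
          omega
    _ = r := Finset.card_range r

section LastRows

variable {F : Type*} [Field F] {r δ ti k : ℕ} (Q : Matrix (Fin (δ - 1)) (Fin r) F)
  (L : ℕ → Finset ℕ)

lemma Hval_last_self (hcr : cVal r k * r ≤ bVal r ti k * (δ - 1)) {i : ℕ}
    (hi : k + bVal r ti k * (δ - 1) ≤ i) : Hval F r δ ti k Q L (i - k) i = 1 := by
  unfold Hval
  rw [if_neg (by omega), if_neg (by omega), if_neg (by omega), if_neg (by omega),
    if_pos (by omega)]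

lemma Hval_last_eq_zero {i j : ℕ} (hi : k + bVal r ti k * (δ - 1) ≤ i) (hji : j ≠ i)
    (hj : ¬ (k ≤ j ∧ j < k + cVal r k * r ∧
      (j - k) / r = (i - k - bVal r ti k * (δ - 1)) / (δ - 1))) :
    Hval F r δ ti k Q L (i - k) j = 0 := by
  unfold Hval
  rw [if_neg (by omega)]
  split_ifs with h1 h2 h3 h4 h5 h6
  all_goals first | rfl | skip
  · exact absurd ⟨not_lt.mp h1, h2, h3⟩ hj
  · omega

end LastRows

/-- Lemma 2(4): every coordinate `i` with `k + b(δ-1) ≤ i < n` has an `r`-recovery set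
contained in `{k, …, k + ⌈s/r⌉·r - 1}`. -/
theorem statement5 {F : Type*} [Field F] [Fintype F]
    (r δ ti k : ℕ) (hr : 2 ≤ r) (hδ : 2 ≤ δ) (hti : 2 ≤ ti) (hk : r ∣ k)
    (Q : Matrix (Fin (δ - 1)) (Fin r) F)
    -- `Q` is the parity part of a parity-check matrix `[Q ∣ I_{δ-1}]` of an
    -- `[r+δ-1, r, δ]` MDS code: the kernel code has minimum Hamming distance exactly `δ`.
    (hQ : (∀ x : Fin (r + (δ - 1)) → F,
        (∀ ρ : Fin (δ - 1),
          (∑ l : Fin r, Q ρ l * x (Fin.castAdd (δ - 1) l)) + x (Fin.natAdd r ρ) = 0) →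
        x ≠ 0 → δ ≤ {i : Fin (r + (δ - 1)) | x i ≠ 0}.ncard) ∧
      (∃ x : Fin (r + (δ - 1)) → F,
        (∀ ρ : Fin (δ - 1),
          (∑ l : Fin r, Q ρ l * x (Fin.castAdd (δ - 1) l)) + x (Fin.natAdd r ρ) = 0) ∧
        x ≠ 0 ∧ {i : Fin (r + (δ - 1)) | x i ≠ 0}.ncard = δ))
    (L : ℕ → Finset ℕ)
    -- `L 0, …, L (b-1)` are the lines of a `(t_i, r)`-resolvable design on `{0, …, k-1}`:
    (hLsub : ∀ j < bVal r ti k, L j ⊆ Finset.range k)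
    (hLcard : ∀ j < bVal r ti k, (L j).card = r)
    (hpt : ∀ p < k, ((Finset.range (bVal r ti k)).filter (fun j => p ∈ L j)).card = ti)
    (hmeet : ∀ j < bVal r ti k, ∀ j' < bVal r ti k, j ≠ j' → (L j ∩ L j').card ≤ 1)
    (hres : ∃ cls : ℕ → ℕ, (∀ j < bVal r ti k, cls j < ti) ∧
      ∀ m < ti, ∀ p < k, ∃! j, j < bVal r ti k ∧ cls j = m ∧ p ∈ L j)
    -- `⌈s/r⌉ · r ≤ b(δ-1)`:
    (hcr : cVal r k * r ≤ bVal r ti k * (δ - 1))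
    :
    ∀ i : Fin (nVal r δ ti k), k + bVal r ti k * (δ - 1) ≤ (i : ℕ) →
      ∃ R : Finset (Fin (nVal r δ ti k)),
        RecSet (codeC F r δ ti k Q L : Set (Fin (nVal r δ ti k) → F)) r i R ∧
        ∀ x ∈ R, k ≤ (x : ℕ) ∧ (x : ℕ) < k + cVal r k * r := by
  intro i hi
  have hrow : (i : ℕ) - k < mVal r δ ti k := by
    have := i.isLt
    simp only [mVal, add_mul]
    simp only [nVal] at this
    omega
  refine ⟨blockCols r δ ti k (((i : ℕ) - k - bVal r ti k * (δ - 1)) / (δ - 1)),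
    recSet_of_parity_check (fun j => Hmat F r δ ti k Q L ⟨(i : ℕ) - k, hrow⟩ j) ?_
      (card_blockCols_le _ _ _ _ _ (by omega)) ?_ ?_ ?_, ?_⟩
  · intro hmem
    simp only [blockCols, Finset.mem_filter, Finset.mem_univ, true_and] at hmem
    omega
  · intro x hx
    have hx' : (Hmat F r δ ti k Q L).mulVec x = 0 := hx
    exact congrFun hx' ⟨(i : ℕ) - k, hrow⟩
  · exact Hval_last_self Q L hcr hi
  · intro j hj hji
    refine Hval_last_eq_zero Q L hi (fun h => hji (Fin.ext h)) fun h => hj ?_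
    simpa only [blockCols, Finset.mem_filter, Finset.mem_univ, true_and] using h
  · intro x hx
    simp only [blockCols, Finset.mem_filter, Finset.mem_univ, true_and] at hx
    exact ⟨hx.1, hx.2.1⟩
end

section
/- Let C ⊆ F^n be the code with parity-check matrix H produced by the construction (Algorithm 1). Then C is an (r, t)-SLRC with t = t_i(δ−1): for every nonempty subset I ⊆ [n] with |I| ≤ t_i(δ−1), there exists an i ∈ I that has an r-recovery set R_i ⊆ [n]\I. -/
/-- `C` is an `(r, t)`-sequential locally recoverable code. -/
def IsSLRC {F : Type*} [Field F] {n : ℕ} (C : Set (Fin n → F)) (r t : ℕ) : Prop :=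
  ∀ I : Finset (Fin n), I.card ≤ t →
    ∃ l : List (Fin n), l.Nodup ∧ l.toFinset = I ∧
      ∀ j : Fin l.length, ∃ R : Finset (Fin n),
        RecSet C r (l.get j) R ∧ ∀ x ∈ R, x ∉ I ∨ x ∈ l.take (j : ℕ)

/-! ### Sequential recovery order -/

/-- Removing one recoverable coordinate at a time yields a sequential recovery order. -/
lemma isSLRC_of_exists {F : Type*} [Field F] {n : ℕ} (C : Set (Fin n → F)) (r t : ℕ)
    (h : ∀ I : Finset (Fin n), I.Nonempty → I.card ≤ t →
      ∃ i ∈ I, ∃ R : Finset (Fin n), RecSet C r i R ∧ ∀ x ∈ R, x ∉ I) :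
    IsSLRC C r t := by
  intro I
  induction I using Finset.strongInduction with
  | H I ih =>
    intro hI
    rcases I.eq_empty_or_nonempty with rfl | hne
    · exact ⟨[], List.nodup_nil, rfl, fun j => j.elim0⟩
    obtain ⟨i, hi, R, hR, hRI⟩ := h I hne hI
    obtain ⟨l, hnd, hl, hrec⟩ := ih (I.erase i) (Finset.erase_ssubset hi)
      ((Finset.card_erase_le).trans hI)
    have hil : i ∉ l := by
      intro hmem
      have : i ∈ I.erase i := by rw [← hl]; simpa using hmem
      simp at this
    refine ⟨i :: l, List.nodup_cons.2 ⟨hil, hnd⟩, ?_, ?_⟩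
    · rw [List.toFinset_cons, hl, Finset.insert_erase hi]
    · intro j
      obtain ⟨j, hj⟩ := j
      cases j with
      | zero => exact ⟨R, hR, fun x hx => Or.inl (hRI x hx)⟩
      | succ j =>
        obtain ⟨R', hR', hx'⟩ := hrec ⟨j, by simpa using hj⟩
        refine ⟨R', hR', fun x hx => ?_⟩
        rcases hx' x hx with h1 | h1
        · by_cases hxi : x = i
          · right; simp [hxi]
          · left; intro hxI; exact h1 (Finset.mem_erase.2 ⟨hxi, hxI⟩)
        · right
          simp only [List.take_succ_cons, List.mem_cons]
          exact Or.inr h1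

/-! ### Recovery inside an MDS block -/

/-- The parity checks `[Q ∣ I_d] y = 0`. -/
def LocalCheck {F : Type*} [Field F] {r d : ℕ} (Q : Matrix (Fin d) (Fin r) F)
    (y : Fin (r + d) → F) : Prop :=
  ∀ ρ : Fin d, (∑ l : Fin r, Q ρ l * y (Fin.castAdd d l)) + y (Fin.natAdd r ρ) = 0

/-- In an MDS block `e` with at most `d` erasures, each erased coordinate has a recovery set of
size `r` avoiding the erasures: enlarge the erasures to a set `E` of exactly `d` positions;
restriction of local codewords to the complement of `E` is injective by the minimum distance,
so a linear left inverse expresses the erased symbol through the `r` symbols outside `E`. -/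
lemma recSet_of_block {F : Type*} [Field F] {r d n : ℕ} (Q : Matrix (Fin d) (Fin r) F)
    (hQ : ∀ y : Fin (r + d) → F, LocalCheck Q y → y ≠ 0 → d < {i | y i ≠ 0}.ncard)
    (C : Set (Fin n → F)) (e : Fin (r + d) → Fin n) (he : Function.Injective e)
    (hC : ∀ x ∈ C, LocalCheck Q (x ∘ e)) (I : Finset (Fin n)) (i₀ : Fin (r + d))
    (hi₀ : e i₀ ∈ I) (hcard : (Finset.univ.filter (fun i => e i ∈ I)).card ≤ d) :
    ∃ R : Finset (Fin n), RecSet C r (e i₀) R ∧ ∀ x ∈ R, x ∉ I := by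
  classical
  obtain ⟨E, hE, hEc⟩ := Finset.exists_superset_card_eq hcard (by simp)
  let D : Submodule F (Fin (r + d) → F) :=
    { carrier := {y | LocalCheck Q y}
      add_mem' := by
        intro a b ha hb ρ
        have h1 := ha ρ
        have h2 := hb ρ
        simp only [Pi.add_apply, mul_add, Finset.sum_add_distrib]
        linear_combination h1 + h2
      zero_mem' := by intro ρ; simp
      smul_mem' := by
        intro c a ha ρ
        have h1 := ha ρ
        simp only [Pi.smul_apply, smul_eq_mul, mul_left_comm _ c, ← Finset.mul_sum]
        linear_combination c * h1 }
  let π : D →ₗ[F] ({i // i ∈ Eᶜ} → F) :=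
    (LinearMap.funLeft F F (Subtype.val : {i // i ∈ Eᶜ} → Fin (r + d))).comp D.subtype
  have hπ : LinearMap.ker π = ⊥ := by
    rw [LinearMap.ker_eq_bot']
    rintro ⟨y, hy⟩ h0
    by_contra hne
    have hy0 : y ≠ 0 := fun h => hne (by ext1; exact h)
    have h1 := hQ y hy hy0
    have h2 : {i | y i ≠ 0} ⊆ (E : Set (Fin (r + d))) := by
      intro i hi
      by_contra hiE
      exact hi (congrFun h0 ⟨i, by simpa using hiE⟩)
    have h3 := Set.ncard_le_ncard h2 (Finset.finite_toSet E)
    rw [Set.ncard_coe_finset] at h3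
    omega
  obtain ⟨g, hg⟩ := LinearMap.exists_leftInverse_of_injective π hπ
  let φ : ({i // i ∈ Eᶜ} → F) →ₗ[F] F := (LinearMap.proj i₀).comp (D.subtype.comp g)
  have hφ : ∀ y ∈ D, y i₀ = ∑ i : {i // i ∈ Eᶜ}, φ (Pi.single i 1) * y i := by
    intro y hy
    have h1 : g (π ⟨y, hy⟩) = ⟨y, hy⟩ := LinearMap.congr_fun hg ⟨y, hy⟩
    have h2 : y i₀ = φ (π ⟨y, hy⟩) := by
      change y i₀ = (g (π ⟨y, hy⟩)).1 i₀
      rw [h1]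
    rw [h2, LinearMap.pi_apply_eq_sum_univ φ]
    refine Finset.sum_congr rfl fun i _ => ?_
    rw [smul_eq_mul, mul_comm]
    congr 2
    ext j
    simp [Pi.single_apply, eq_comm]
  refine ⟨Eᶜ.image e, ⟨?_, ?_, ?_⟩, ?_⟩
  · intro h
    obtain ⟨i, hi, hii⟩ := Finset.mem_image.1 h
    rw [he hii] at hi
    exact (Finset.mem_compl.1 hi) (hE (by simpa using hi₀))
  · refine Finset.card_image_le.trans ?_
    rw [Finset.card_compl, hEc]
    simp
  · refine ⟨Function.extend e (fun i => if h : i ∈ Eᶜ then φ (Pi.single ⟨i, h⟩ 1) else 0) 0,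
      fun x hx => ?_⟩
    rw [Finset.sum_image (fun _ _ _ _ h => he h), ← Finset.sum_coe_sort]
    refine (hφ (x ∘ e) (hC x hx)).trans (Finset.sum_congr rfl fun i _ => ?_)
    rw [he.extend_apply, dif_pos i.2]
    rfl
  · intro x hx hxI
    obtain ⟨i, hi, rfl⟩ := Finset.mem_image.1 hx
    exact (Finset.mem_compl.1 hi) (hE (by simpa using hxI))

/-- If the erasures of a block avoid its first `r` positions, there are at most `d` of them. -/
lemma card_erased_le {r d n : ℕ} (e : Fin (r + d) → Fin n) (I : Finset (Fin n))
    (h : ∀ l : Fin r, e (Fin.castAdd d l) ∉ I) :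
    (Finset.univ.filter (fun i => e i ∈ I)).card ≤ d := by
  classical
  have hsub : Finset.univ.filter (fun i => e i ∈ I) ⊆
      Finset.univ.image (Fin.natAdd r : Fin d → Fin (r + d)) := by
    intro i hi
    induction i using Fin.addCases with
    | left l => exact absurd (Finset.mem_filter.1 hi).2 (h l)
    | right ρ => simp
  refine (Finset.card_le_card hsub).trans (Finset.card_image_le.trans ?_)
  simp

/-! ### Local blocks of the parity-check matrix -/

/-- If row `row ρ` of a parity-check matrix carries `[Q ∣ I_d]` row `ρ` in the columns `e` and
zeros elsewhere, then words of the kernel satisfy the local checks on the block `e`. -/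
lemma localCheck_of_rows {F : Type*} [Field F] {r d n m : ℕ} (Q : Matrix (Fin d) (Fin r) F)
    (H : Matrix (Fin m) (Fin n) F) (e : Fin (r + d) → Fin n) (he : Function.Injective e)
    (row : Fin d → Fin m)
    (hleft : ∀ ρ l, H (row ρ) (e (Fin.castAdd d l)) = Q ρ l)
    (hright : ∀ ρ ρ', H (row ρ) (e (Fin.natAdd r ρ')) = if ρ' = ρ then 1 else 0)
    (hzero : ∀ ρ γ, γ ∉ Set.range e → H (row ρ) γ = 0)
    (x : Fin n → F) (hx : H.mulVec x = 0) : LocalCheck Q (x ∘ e) := by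
  intro ρ
  have h1 : ∑ γ, H (row ρ) γ * x γ = 0 := congrFun hx (row ρ)
  rw [← Fintype.sum_of_injective e he (fun i => H (row ρ) (e i) * x (e i))
    (fun γ => H (row ρ) γ * x γ) (fun γ hγ => by simp [hzero ρ γ hγ]) (fun _ => rfl),
    Fin.sum_univ_add] at h1
  simpa [hleft, hright] using h1

lemma card_filter_lt_orderEmbOfFin {r : ℕ} (s : Finset ℕ) (h : s.card = r) (l : Fin r) :
    (s.filter (fun x => x < s.orderEmbOfFin h l)).card = l := by
  have : s.filter (fun x => x < s.orderEmbOfFin h l) =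
      (Finset.Iio l).map (s.orderEmbOfFin h).toEmbedding := by
    ext x
    simp only [Finset.mem_filter, Finset.mem_map, Finset.mem_Iio]
    constructor
    · rintro ⟨hx, hlt⟩
      have : x ∈ Set.range (s.orderEmbOfFin h) := by
        rw [Finset.range_orderEmbOfFin]; exact hx
      obtain ⟨a, rfl⟩ := this
      exact ⟨a, by simpa using hlt, rfl⟩
    · rintro ⟨a, ha, rfl⟩
      exact ⟨Finset.orderEmbOfFin_mem s h a, by simpa using ha⟩
  rw [this, Finset.card_map, Fin.card_Iio]

section Blocks

variable {F : Type*} [Field F] {r δ ti k : ℕ}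

/-- The block of a line `L j`: its `r` points in increasing order, followed by the `δ - 1` parity
columns of the line. -/
lemma exists_lineBlock (Q : Matrix (Fin (δ - 1)) (Fin r) F) (L : ℕ → Finset ℕ)
    {j : ℕ} (hj : j < bVal r ti k) (hsub : L j ⊆ Finset.range k) (hcard : (L j).card = r) :
    ∃ e : Fin (r + (δ - 1)) → Fin (nVal r δ ti k), Function.Injective e ∧
      (∀ l, (e (Fin.castAdd (δ - 1) l) : ℕ) ∈ L j) ∧
      (∀ ρ, (e (Fin.natAdd r ρ) : ℕ) = k + (j * (δ - 1) + ρ)) ∧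
      (∀ γ : Fin (nVal r δ ti k), (γ : ℕ) ∈ L j → γ ∈ Set.range e) ∧
      ∀ x ∈ codeC F r δ ti k Q L, LocalCheck Q (x ∘ e) := by
  have hrow : ∀ ρ : Fin (δ - 1), j * (δ - 1) + ρ < bVal r ti k * (δ - 1) := by
    intro ρ
    have h1 : (j + 1) * (δ - 1) ≤ bVal r ti k * (δ - 1) := Nat.mul_le_mul_right (δ - 1) hj
    have := ρ.2
    rw [Nat.add_mul] at h1
    omega
  have hn : nVal r δ ti k = k + bVal r ti k * (δ - 1) + cVal r k * (δ - 1) := rfl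
  have hm : mVal r δ ti k = bVal r ti k * (δ - 1) + cVal r k * (δ - 1) := by
    rw [← Nat.add_mul]; rfl
  have hmem : ∀ l, (L j).orderEmbOfFin hcard l ∈ L j := fun l => Finset.orderEmbOfFin_mem _ _ l
  have hlt : ∀ x ∈ L j, x < k := fun x hx => Finset.mem_range.1 (hsub hx)
  let e : Fin (r + (δ - 1)) → Fin (nVal r δ ti k) := Fin.addCases
    (fun l => ⟨(L j).orderEmbOfFin hcard l, by have := hlt _ (hmem l); omega⟩)
    (fun ρ => ⟨k + (j * (δ - 1) + ρ), by have := hrow ρ; omega⟩)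
  have el : ∀ l, (e (Fin.castAdd (δ - 1) l) : ℕ) = (L j).orderEmbOfFin hcard l := by
    intro l; simp [e]
  have er : ∀ ρ, (e (Fin.natAdd r ρ) : ℕ) = k + (j * (δ - 1) + ρ) := by
    intro ρ; simp [e]
  have hinj : Function.Injective e := by
    intro a a' h
    have h := congrArg Fin.val h
    induction a using Fin.addCases with
    | left l =>
      induction a' using Fin.addCases with
      | left l' =>
        rw [el, el] at h
        rw [(L j).orderEmbOfFin hcard |>.injective h]
      | right ρ =>
        rw [el, er] at h
        have := hlt _ (hmem l); omega
    | right ρ =>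
      induction a' using Fin.addCases with
      | left l =>
        rw [el, er] at h
        have := hlt _ (hmem l); omega
      | right ρ' =>
        rw [er, er] at h
        congr 1; ext; omega
  have hcov : ∀ γ : Fin (nVal r δ ti k), (γ : ℕ) ∈ L j → γ ∈ Set.range e := by
    intro γ hγ
    have : (γ : ℕ) ∈ Set.range ((L j).orderEmbOfFin hcard) := by
      rw [Finset.range_orderEmbOfFin]; exact hγ
    obtain ⟨l, hl⟩ := this
    exact ⟨Fin.castAdd (δ - 1) l, by ext; rw [el, hl]⟩
  refine ⟨e, hinj, fun l => by rw [el]; exact hmem l, er, hcov, ?_⟩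
  intro x hx
  have hdiv : ∀ ρ : Fin (δ - 1), (j * (δ - 1) + ρ) / (δ - 1) = j := by
    intro ρ
    rw [Nat.mul_comm, Nat.mul_add_div (by have := ρ.2; omega), Nat.div_eq_of_lt ρ.2, add_zero]
  have hmod : ∀ ρ : Fin (δ - 1), (j * (δ - 1) + ρ) % (δ - 1) = ρ := by
    intro ρ
    rw [Nat.mul_comm, Nat.mul_add_mod, Nat.mod_eq_of_lt ρ.2]
  refine localCheck_of_rows Q (Hmat F r δ ti k Q L) e hinj
    (fun ρ => ⟨j * (δ - 1) + ρ, by have := hrow ρ; omega⟩) ?_ ?_ ?_ x hx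
  · intro ρ l
    have h1 := hlt _ (hmem l)
    simp only [Hmat, Matrix.of_apply, Hval, el, hdiv, hmod, hrow ρ, if_true, h1, hmem l,
      card_filter_lt_orderEmbOfFin]
    simp
  · intro ρ ρ'
    have h1 := hrow ρ'
    have h2 : k + (j * (δ - 1) + (ρ' : ℕ)) < k + bVal r ti k * (δ - 1) := by omega
    simp only [Hmat, Matrix.of_apply, Hval, er, hrow ρ, if_true, h2]
    rw [if_neg (by omega)]
    refine if_congr ?_ rfl rfl
    rw [Fin.ext_iff]; omega
  · intro ρ γ hγ
    have h1 : (γ : ℕ) ∉ L j := fun h => hγ (hcov γ h)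
    have h2 : (γ : ℕ) ≠ k + (j * (δ - 1) + ρ) := fun h => hγ ⟨Fin.natAdd r ρ, by ext; rw [er, h]⟩
    simp only [Hmat, Matrix.of_apply, Hval, hdiv, hrow ρ, if_true, h1, h2, if_false]
    simp

/-- The `j`-th global block: the `r` columns of the `j`-th copy of `Q` in `W*`, followed by the
corresponding `δ - 1` of the last columns. -/
lemma exists_globalBlock (Q : Matrix (Fin (δ - 1)) (Fin r) F) (L : ℕ → Finset ℕ)
    {j : ℕ} (hj : j < cVal r k) (hcr : cVal r k * r ≤ bVal r ti k * (δ - 1)) :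
    ∃ e : Fin (r + (δ - 1)) → Fin (nVal r δ ti k), Function.Injective e ∧
      (∀ l, (e (Fin.castAdd (δ - 1) l) : ℕ) < k + bVal r ti k * (δ - 1)) ∧
      (∀ ρ, (e (Fin.natAdd r ρ) : ℕ) = k + bVal r ti k * (δ - 1) + (j * (δ - 1) + ρ)) ∧
      ∀ x ∈ codeC F r δ ti k Q L, LocalCheck Q (x ∘ e) := by
  have hrow : ∀ ρ : Fin (δ - 1), j * (δ - 1) + ρ < cVal r k * (δ - 1) := by
    intro ρ
    have h1 : (j + 1) * (δ - 1) ≤ cVal r k * (δ - 1) := Nat.mul_le_mul_right (δ - 1) hj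
    have := ρ.2
    rw [Nat.add_mul] at h1
    omega
  have hcol : ∀ l : Fin r, j * r + l < cVal r k * r := by
    intro l
    have h1 : (j + 1) * r ≤ cVal r k * r := Nat.mul_le_mul_right r hj
    have := l.2
    rw [Nat.add_mul] at h1
    omega
  have hn : nVal r δ ti k = k + bVal r ti k * (δ - 1) + cVal r k * (δ - 1) := rfl
  have hm : mVal r δ ti k = bVal r ti k * (δ - 1) + cVal r k * (δ - 1) := by
    rw [← Nat.add_mul]; rfl
  let e : Fin (r + (δ - 1)) → Fin (nVal r δ ti k) := Fin.addCases
    (fun l => ⟨k + (j * r + l), by have := hcol l; omega⟩)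
    (fun ρ => ⟨k + bVal r ti k * (δ - 1) + (j * (δ - 1) + ρ), by have := hrow ρ; omega⟩)
  have el : ∀ l, (e (Fin.castAdd (δ - 1) l) : ℕ) = k + (j * r + l) := by
    intro l; simp [e]
  have er : ∀ ρ, (e (Fin.natAdd r ρ) : ℕ) = k + bVal r ti k * (δ - 1) + (j * (δ - 1) + ρ) := by
    intro ρ; simp [e]
  have hinj : Function.Injective e := by
    intro a a' h
    have h := congrArg Fin.val h
    induction a using Fin.addCases with
    | left l =>
      have := hcol l
      induction a' using Fin.addCases with
      | left l' =>
        rw [el, el] at h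
        congr 1; ext; omega
      | right ρ =>
        rw [el, er] at h
        omega
    | right ρ =>
      induction a' using Fin.addCases with
      | left l =>
        rw [el, er] at h
        have := hcol l; omega
      | right ρ' =>
        rw [er, er] at h
        congr 1; ext; omega
  refine ⟨e, hinj, fun l => by rw [el]; have := hcol l; omega, er, ?_⟩
  intro x hx
  have hdiv : ∀ (c : ℕ) (ρ : Fin c), (j * c + ρ) / c = j := by
    intro c ρ
    rw [Nat.mul_comm, Nat.mul_add_div (by have := ρ.2; omega), Nat.div_eq_of_lt ρ.2, add_zero]
  have hmod : ∀ (c : ℕ) (ρ : Fin c), (j * c + ρ) % c = ρ := by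
    intro c ρ
    rw [Nat.mul_comm, Nat.mul_add_mod, Nat.mod_eq_of_lt ρ.2]
  refine localCheck_of_rows Q (Hmat F r δ ti k Q L) e hinj
    (fun ρ => ⟨bVal r ti k * (δ - 1) + (j * (δ - 1) + ρ), by have := hrow ρ; omega⟩) ?_ ?_ ?_ x hx
  · intro ρ l
    have h1 := hcol l
    have h2 : ¬ (bVal r ti k * (δ - 1) + (j * (δ - 1) + (ρ : ℕ)) < bVal r ti k * (δ - 1)) := by omega
    have h3 : ¬ (k + (j * r + (l : ℕ)) < k) := by omega
    have h4 : k + (j * r + (l : ℕ)) < k + cVal r k * r := by omega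
    simp only [Hmat, Matrix.of_apply, Hval, el, h2, h3, h4, if_true, if_false,
      Nat.add_sub_cancel_left, hdiv, hmod]
    simp
  · intro ρ ρ'
    have h2 : ¬ (bVal r ti k * (δ - 1) + (j * (δ - 1) + (ρ : ℕ)) < bVal r ti k * (δ - 1)) := by omega
    have h3 : ¬ (k + bVal r ti k * (δ - 1) + (j * (δ - 1) + (ρ' : ℕ)) < k) := by omega
    have h4 : ¬ (k + bVal r ti k * (δ - 1) + (j * (δ - 1) + (ρ' : ℕ)) < k + cVal r k * r) := by omega
    have h5 : ¬ (k + bVal r ti k * (δ - 1) + (j * (δ - 1) + (ρ' : ℕ)) < k + bVal r ti k * (δ - 1)) := by omega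
    simp only [Hmat, Matrix.of_apply, Hval, er, h2, h3, h4, h5, if_false,
      Nat.add_sub_cancel_left]
    refine if_congr ?_ rfl rfl
    rw [Fin.ext_iff]; omega
  · intro ρ γ hγ
    have h1 : (γ : ℕ) ≠ k + bVal r ti k * (δ - 1) + (j * (δ - 1) + ρ) :=
      fun h => hγ ⟨Fin.natAdd r ρ, by ext; rw [er, h]⟩
    have h2 : ¬ (bVal r ti k * (δ - 1) + (j * (δ - 1) + (ρ : ℕ)) < bVal r ti k * (δ - 1)) := by omega
    simp only [Hmat, Matrix.of_apply, Hval, h2, if_false, Nat.add_sub_cancel_left, hdiv,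
      hmod, h1, ite_self]
    split_ifs with h3 h4 h5 h6
    · rfl
    · -- such a column would be `e` of its residue modulo `r`
      refine absurd ⟨Fin.castAdd (δ - 1) ⟨((γ : ℕ) - k) % r, h6.2⟩, ?_⟩ hγ
      ext
      rw [el]
      have h7 := Nat.div_add_mod' ((γ : ℕ) - k) r
      rw [h5] at h7
      simp only
      omega
    · rfl
    · rfl
    · rfl

end Blocks

/-! ### Recoverability of every small erasure set -/

/-- Lemma 4 / Theorem 1: the code produced by Algorithm 1 is an `(r, t)`-SLRC with
`t = t_i(δ-1)`: every nonempty `I ⊆ [n]` with `|I| ≤ t_i(δ-1)` contains a coordinate `i`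
having an `r`-recovery set `R_i ⊆ [n] \ I`. -/
theorem statement7 {F : Type*} [Field F] [Fintype F]
    (r δ ti k : ℕ) (hr : 2 ≤ r) (hδ : 2 ≤ δ) (hti : 2 ≤ ti) (hk : r ∣ k)
    (Q : Matrix (Fin (δ - 1)) (Fin r) F)
    -- `Q` is the parity part of a parity-check matrix `[Q ∣ I_{δ-1}]` of an
    -- `[r+δ-1, r, δ]` MDS code: the kernel code has minimum Hamming distance exactly `δ`.
    (hQ : (∀ x : Fin (r + (δ - 1)) → F,
        (∀ ρ : Fin (δ - 1),
          (∑ l : Fin r, Q ρ l * x (Fin.castAdd (δ - 1) l)) + x (Fin.natAdd r ρ) = 0) →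
        x ≠ 0 → δ ≤ {i : Fin (r + (δ - 1)) | x i ≠ 0}.ncard) ∧
      (∃ x : Fin (r + (δ - 1)) → F,
        (∀ ρ : Fin (δ - 1),
          (∑ l : Fin r, Q ρ l * x (Fin.castAdd (δ - 1) l)) + x (Fin.natAdd r ρ) = 0) ∧
        x ≠ 0 ∧ {i : Fin (r + (δ - 1)) | x i ≠ 0}.ncard = δ))
    (L : ℕ → Finset ℕ)
    -- `L 0, …, L (b-1)` are the lines of a `(t_i, r)`-resolvable design on `{0, …, k-1}`:
    (hLsub : ∀ j < bVal r ti k, L j ⊆ Finset.range k)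
    (hLcard : ∀ j < bVal r ti k, (L j).card = r)
    (hpt : ∀ p < k, ((Finset.range (bVal r ti k)).filter (fun j => p ∈ L j)).card = ti)
    (hmeet : ∀ j < bVal r ti k, ∀ j' < bVal r ti k, j ≠ j' → (L j ∩ L j').card ≤ 1)
    (hres : ∃ cls : ℕ → ℕ, (∀ j < bVal r ti k, cls j < ti) ∧
      ∀ m < ti, ∀ p < k, ∃! j, j < bVal r ti k ∧ cls j = m ∧ p ∈ L j)
    -- `⌈s/r⌉ · r ≤ b(δ-1)`:
    (hcr : cVal r k * r ≤ bVal r ti k * (δ - 1))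
    :
    IsSLRC (codeC F r δ ti k Q L : Set (Fin (nVal r δ ti k) → F)) r (ti * (δ - 1)) ∧
    ∀ I : Finset (Fin (nVal r δ ti k)), I.Nonempty → I.card ≤ ti * (δ - 1) →
      ∃ i ∈ I, ∃ R : Finset (Fin (nVal r δ ti k)),
        RecSet (codeC F r δ ti k Q L : Set (Fin (nVal r δ ti k) → F)) r i R ∧
        ∀ x ∈ R, x ∉ I := by
  classical
  suffices hmain : ∀ I : Finset (Fin (nVal r δ ti k)), I.Nonempty → I.card ≤ ti * (δ - 1) →
      ∃ i ∈ I, ∃ R : Finset (Fin (nVal r δ ti k)),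
        RecSet (codeC F r δ ti k Q L : Set (Fin (nVal r δ ti k) → F)) r i R ∧
        ∀ x ∈ R, x ∉ I from ⟨isSLRC_of_exists _ _ _ hmain, hmain⟩
  intro I hne hI
  have hQ' : ∀ y : Fin (r + (δ - 1)) → F, LocalCheck Q y → y ≠ 0 →
      δ - 1 < {i | y i ≠ 0}.ncard := by
    intro y hy hy0
    have := hQ.1 y hy hy0
    omega
  by_cases hp : ∃ p ∈ I, (p : ℕ) < k
  · obtain ⟨p, hpI, hpk⟩ := hp
    refine ⟨p, hpI, ?_⟩
    by_contra hcon
    set J := (Finset.range (bVal r ti k)).filter (fun j => (p : ℕ) ∈ L j) with hJ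
    -- the erasures other than `p` in the line block of `j`
    let B : ℕ → Finset (Fin (nVal r δ ti k)) := fun j => (I.erase p).filter
      (fun γ => (γ : ℕ) ∈ L j ∨ ∃ ρ : Fin (δ - 1), (γ : ℕ) = k + (j * (δ - 1) + ρ))
    have hB : ∀ j ∈ J, δ - 1 ≤ (B j).card := by
      intro j hj
      obtain ⟨hjb, hpj⟩ := Finset.mem_filter.1 hj
      have hjb := Finset.mem_range.1 hjb
      obtain ⟨e, hinj, hel, her, hcov, hchk⟩ :=
        exists_lineBlock Q L hjb (hLsub j hjb) (hLcard j hjb)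
      obtain ⟨i₀, rfl⟩ := hcov p hpj
      have hgt : δ - 1 < (Finset.univ.filter (fun i => e i ∈ I)).card := by
        by_contra hle
        exact hcon (recSet_of_block Q hQ' _ e hinj hchk I i₀ hpI (not_lt.1 hle))
      have hsub : ((Finset.univ.filter (fun i => e i ∈ I)).image e).erase (e i₀) ⊆ B j := by
        intro γ hγ
        obtain ⟨hne', hγ⟩ := Finset.mem_erase.1 hγ
        obtain ⟨i, hi, rfl⟩ := Finset.mem_image.1 hγ
        refine Finset.mem_filter.2 ⟨Finset.mem_erase.2 ⟨hne', (Finset.mem_filter.1 hi).2⟩, ?_⟩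
        induction i using Fin.addCases with
        | left l => exact Or.inl (hel l)
        | right ρ => exact Or.inr ⟨ρ, her ρ⟩
      have h1 := Finset.card_le_card hsub
      rw [Finset.card_erase_of_mem (Finset.mem_image_of_mem e (by simpa using hpI)),
        Finset.card_image_of_injective _ hinj] at h1
      omega
    have hdisj : (J : Set ℕ).PairwiseDisjoint B := by
      intro j hj j' hj' hjj
      obtain ⟨hjb, hpj⟩ := Finset.mem_filter.1 hj
      obtain ⟨hjb', hpj'⟩ := Finset.mem_filter.1 hj'
      have hjb := Finset.mem_range.1 hjb
      have hjb' := Finset.mem_range.1 hjb'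
      refine Finset.disjoint_left.2 fun γ h1 h2 => ?_
      obtain ⟨h1e, h1⟩ := Finset.mem_filter.1 h1
      obtain ⟨-, h2⟩ := Finset.mem_filter.1 h2
      rcases h1 with h1 | ⟨ρ, h1⟩
      · have hlt := Finset.mem_range.1 (hLsub j hjb h1)
        rcases h2 with h2 | ⟨ρ', h2⟩
        · -- two distinct lines through `p` share no further point
          have := Finset.card_le_one.1 (hmeet j hjb j' hjb' hjj) γ
            (Finset.mem_inter.2 ⟨h1, h2⟩) p (Finset.mem_inter.2 ⟨hpj, hpj'⟩)
          exact (Finset.mem_erase.1 h1e).1 (Fin.ext this)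
        · omega
      · rcases h2 with h2 | ⟨ρ', h2⟩
        · have hlt := Finset.mem_range.1 (hLsub j' hjb' h2)
          omega
        · have h3 : j * (δ - 1) + (ρ : ℕ) = j' * (δ - 1) + ρ' := by omega
          have h4 := congrArg (· / (δ - 1)) h3
          have hpos : 0 < δ - 1 := by omega
          simp only [Nat.mul_comm _ (δ - 1), Nat.mul_add_div hpos, Nat.div_eq_of_lt ρ.2,
            Nat.div_eq_of_lt ρ'.2, add_zero] at h4
          exact hjj h4
    have hJc : J.card = ti := hpt p hpk
    have h1 : J.card * (δ - 1) ≤ (J.biUnion B).card := by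
      rw [Finset.card_biUnion hdisj, ← smul_eq_mul]
      exact Finset.card_nsmul_le_sum _ _ _ hB
    have h2 : (J.biUnion B).card ≤ (I.erase p).card :=
      Finset.card_le_card (Finset.biUnion_subset.2 fun j _ => Finset.filter_subset _ _)
    have h3 := Finset.card_erase_lt_of_mem hpI
    rw [hJc] at h1
    omega
  push Not at hp
  have hpos : 0 < δ - 1 := by omega
  by_cases hq : ∃ q ∈ I, (q : ℕ) < k + bVal r ti k * (δ - 1)
  · obtain ⟨q, hqI, hq⟩ := hq
    have hkq := hp q hqI
    have hjb : ((q : ℕ) - k) / (δ - 1) < bVal r ti k := by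
      rw [Nat.div_lt_iff_lt_mul hpos]; omega
    obtain ⟨e, hinj, hel, her, -, hchk⟩ :=
      exists_lineBlock Q L hjb (hLsub _ hjb) (hLcard _ hjb)
    have heq : e (Fin.natAdd r ⟨((q : ℕ) - k) % (δ - 1), Nat.mod_lt _ hpos⟩) = q := by
      ext
      rw [her]
      have := Nat.div_add_mod' ((q : ℕ) - k) (δ - 1)
      simp only
      omega
    refine ⟨q, hqI, ?_⟩
    rw [← heq] at hqI ⊢
    refine recSet_of_block Q hQ' _ e hinj hchk I _ hqI (card_erased_le e I fun l hl => ?_)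
    have h1 := hp _ hl
    have h2 := Finset.mem_range.1 (hLsub _ hjb (hel l))
    omega
  · push Not at hq
    obtain ⟨q, hqI⟩ := hne
    have hkq := hq q hqI
    have hqn : (q : ℕ) < k + bVal r ti k * (δ - 1) + cVal r k * (δ - 1) := q.2
    have hjb : ((q : ℕ) - (k + bVal r ti k * (δ - 1))) / (δ - 1) < cVal r k := by
      rw [Nat.div_lt_iff_lt_mul hpos]; omega
    obtain ⟨e, hinj, hel, her, hchk⟩ := exists_globalBlock (ti := ti) Q L hjb hcr
    have heq : e (Fin.natAdd r
        ⟨((q : ℕ) - (k + bVal r ti k * (δ - 1))) % (δ - 1), Nat.mod_lt _ hpos⟩) = q := by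
      ext
      rw [her]
      have := Nat.div_add_mod' ((q : ℕ) - (k + bVal r ti k * (δ - 1))) (δ - 1)
      simp only
      omega
    refine ⟨q, hqI, ?_⟩
    rw [← heq] at hqI ⊢
    refine recSet_of_block Q hQ' _ e hinj hchk I _ hqI (card_erased_le e I fun l hl => ?_)
    have h1 := hq _ hl
    have h2 := hel l
    omega
end
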